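/- arXiv:2003.10263 — 9 statements merged into one kernel-verified Lean document; each statement's English description precedes it below -/
import Mathlib

section
/- Let [a,b] be a nondegenerate compact interval, let (uₙ)_{n≥1} ∈ ℱ and let (aₙ)_{n≥1} be a sequence of real numbers. Then the partial sums of the series ∑_{n=1}^∞ aₙ uₙ(x) converge uniformly on [a,b] if and only if aₙ → 0 as n → ∞. -/
open Filter Topology

/-- The family ℱ: sequences of continuous functions on [a,b] with pairwise disjoint
supports, uniformly bounded and uniformly far from zero in sup norm. -/
def MemF (a b : ℝ) (u : ℕ → C(Set.Icc a b, ℝ)) : Prop :=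
  (∀ n m, n ≠ m → Function.support ⇑(u n) ∩ Function.support ⇑(u m) = ∅) ∧
  0 < ⨅ n, ‖u n‖ ∧ BddAbove (Set.range fun n => ‖u n‖)

/-!
At every point at most one term of a series with pairwise disjoint supports is nonzero, so each
tail of the series is, pointwise, a single later term. Hence the series converges uniformly if and
only if its terms tend to zero uniformly. For the terms `c n • u n` this means
`‖c n‖ * ‖u n‖ → 0`, which is `c n → 0` as soon as `‖u n‖` stays between two positive constants.
-/

open Asymptotics Function

section DisjointSupport

variable {α G : Type*}

theorem exists_forall_ne_eq_zero_of_pairwise_disjoint_support {ι : Type*} [Nonempty ι] [Zero G]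
    {f : ι → α → G} (hf : Pairwise (Disjoint on fun i => support (f i))) (x : α) :
    ∃ k, ∀ i, i ≠ k → f i x = 0 := by
  by_cases hx : ∃ k, f k x ≠ 0
  · obtain ⟨k, hk⟩ := hx
    exact ⟨k, fun i hik => of_not_not fun hi => Set.disjoint_left.1 (hf hik) hi hk⟩
  · push Not at hx
    exact ⟨Classical.arbitrary ι, fun i _ => hx i⟩

variable [AddCommGroup G] {f : ℕ → α → G}

theorem exists_ge_sum_range_sub_finsum_eq_neg
    (hf : Pairwise (Disjoint on fun n => support (f n))) (N : ℕ) (x : α) :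
    ∃ m ≥ N, ∑ n ∈ Finset.range N, f n x - ∑ᶠ n, f n x = -f m x := by
  obtain ⟨k, hk⟩ := exists_forall_ne_eq_zero_of_pairwise_disjoint_support hf x
  rw [finsum_eq_single _ k hk]
  rcases lt_or_ge k N with hkN | hNk
  · refine ⟨N, le_rfl, ?_⟩
    rw [Finset.sum_eq_single_of_mem k (Finset.mem_range.2 hkN) fun n _ => hk n, sub_self,
      hk N hkN.ne', neg_zero]
  · refine ⟨k, hNk, ?_⟩
    rw [Finset.sum_eq_zero fun n hn => hk n ((Finset.mem_range.1 hn).trans_le hNk).ne, zero_sub]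

variable [UniformSpace G] [IsUniformAddGroup G]

theorem tendstoUniformly_zero_of_tendstoUniformly_sum_range {S : α → G}
    (hS : TendstoUniformly (fun N x => ∑ n ∈ Finset.range N, f n x) S atTop) :
    TendstoUniformly f 0 atTop := by
  have hS_succ : TendstoUniformly (fun N x => ∑ n ∈ Finset.range (N + 1), f n x) S atTop :=
    fun V hV => (tendsto_add_atTop_nat 1).eventually (hS V hV)
  convert hS_succ.sub hS using 1
  · ext N x
    simp [Finset.sum_range_succ]
  · exact (sub_self S).symm

theorem tendstoUniformly_sum_range_finsum
    (hdisj : Pairwise (Disjoint on fun n => support (f n))) (hf : TendstoUniformly f 0 atTop) :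
    TendstoUniformly (fun N x => ∑ n ∈ Finset.range N, f n x) (fun x => ∑ᶠ n, f n x) atTop := by
  have hneg : TendstoUniformly (-f) 0 atTop := by simpa using hf.neg
  rw [IsTopologicalAddGroup.tendstoUniformly_iff _ _ _ IsUniformAddGroup.rightUniformSpace_eq]
    at hneg ⊢
  intro V hV
  filter_upwards [eventually_forall_ge_atTop.2 (hneg V hV)] with N hN x
  obtain ⟨m, hNm, hm⟩ := exists_ge_sum_range_sub_finsum_eq_neg hdisj N x
  simpa [hm] using hN m hNm x

theorem exists_tendstoUniformly_sum_range_iff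
    (hdisj : Pairwise (Disjoint on fun n => support (f n))) :
    (∃ S, TendstoUniformly (fun N x => ∑ n ∈ Finset.range N, f n x) S atTop) ↔
      TendstoUniformly f 0 atTop :=
  ⟨fun ⟨_, hS⟩ => tendstoUniformly_zero_of_tendstoUniformly_sum_range hS,
    fun hf => ⟨_, tendstoUniformly_sum_range_finsum hdisj hf⟩⟩

end DisjointSupport

section NormComparableToOne

variable {ι E : Type*} {l : Filter ι} [NormedAddCommGroup E] {v : ι → E}

theorem isTheta_one_of_iInf_norm_pos_of_bddAbove (hpos : 0 < ⨅ i, ‖v i‖)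
    (hbdd : BddAbove (Set.range fun i => ‖v i‖)) : v =Θ[l] fun _ => (1 : ℝ) := by
  have hbelow : BddBelow (Set.range fun i => ‖v i‖) :=
    ⟨0, Set.forall_mem_range.2 fun i => norm_nonneg (v i)⟩
  exact ⟨(isBigO_one_iff ℝ).2 hbdd.isBoundedUnder_of_range,
    (isBigO_const_left_iff_pos_le_norm one_ne_zero).2
      ⟨_, hpos, Eventually.of_forall (ciInf_le hbelow)⟩⟩

theorem tendsto_smul_zero_iff_of_isTheta_one {𝕜 : Type*} [NormedField 𝕜] [NormedSpace 𝕜 E]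
    (hv : v =Θ[l] fun _ => (1 : ℝ)) (c : ι → 𝕜) :
    Tendsto (fun i => c i • v i) l (𝓝 0) ↔ Tendsto c l (𝓝 0) := by
  have hone : (fun _ : ι => (1 : ℝ)) =Θ[l] fun _ => (1 : 𝕜) :=
    isTheta_const_const one_ne_zero one_ne_zero
  simpa using ((isTheta_refl c l).smul (hv.trans hone)).tendsto_zero_iff

end NormComparableToOne

theorem stmt1_general {X 𝕜 E : Type*} [TopologicalSpace X] [CompactSpace X] [NormedField 𝕜]
    [NormedAddCommGroup E] [NormedSpace 𝕜 E] {u : ℕ → C(X, E)}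
    (hdisj : Pairwise (Disjoint on fun n => support (u n)))
    (hu : u =Θ[atTop] fun _ => (1 : ℝ)) (c : ℕ → 𝕜) :
    (∃ S : X → E, TendstoUniformly (fun N x => ∑ n ∈ Finset.range N, c n • u n x) S atTop) ↔
      Tendsto c atTop (𝓝 0) := by
  have hdisj_smul : Pairwise (Disjoint on fun n => support fun x => c n • u n x) :=
    fun _ _ hnm => (hdisj hnm).mono (support_const_smul_subset _ _) (support_const_smul_subset _ _)
  rw [exists_tendstoUniformly_sum_range_iff hdisj_smul,
    ← tendsto_smul_zero_iff_of_isTheta_one hu c, ContinuousMap.tendsto_iff_tendstoUniformly]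
  rfl

theorem stmt1 (a b : ℝ) (hab : a < b) (u : ℕ → C(Set.Icc a b, ℝ))
    (hu : MemF a b u) (c : ℕ → ℝ) :
    (∃ S : Set.Icc a b → ℝ,
      TendstoUniformly (fun N x => ∑ n ∈ Finset.range N, c n * u n x) S atTop) ↔
    Tendsto c atTop (nhds 0) := by
  obtain ⟨hdisj, hpos, hbdd⟩ := hu
  exact stmt1_general (fun n m hnm => Set.disjoint_iff_inter_eq_empty.2 (hdisj n m hnm))
    (isTheta_one_of_iInf_norm_pos_of_bddAbove hpos hbdd) c
end

section
/- Let [a,b] be a nondegenerate compact interval. For every sequence of functions (uₙ)_{n≥1} ∈ ℱ and every sequence of real scalars (aₙ)_{n≥1} ∈ c₀ \ ℓ₁, the sequence of continuous functions (aₙ uₙ)_{n≥1} belongs to 𝒜ℳ𝒲, i.e. ∑ₙ aₙuₙ(x) converges absolutely at every x ∈ [a,b], its partial sums converge uniformly on [a,b], but ∑ₙ ‖aₙuₙ‖∞ = +∞. -/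
open Filter Topology

/-- Anti M-Weierstrass sequences: the series converges absolutely at each point,
its partial sums converge uniformly, but the series of the sup norms diverges. -/
def AntiMW (a b : ℝ) (f : ℕ → C(Set.Icc a b, ℝ)) : Prop :=
  (∀ x : Set.Icc a b, Summable fun n => |f n x|) ∧
  (∃ S : Set.Icc a b → ℝ,
    TendstoUniformly (fun N x => ∑ n ∈ Finset.range N, f n x) S atTop) ∧
  ¬ Summable fun n => ‖f n‖

/-!
At each point at most one of the functions is nonzero, so every finite partial sum is, at that
point, either the full sum or `0`; in the second case the full sum is a single term whose index has
not been reached yet. Hence a series with disjoint supports converges uniformly as soon as its terms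
tend to `0` uniformly, without any summability of their norms.
-/

section DisjointSupport

open Function

variable {ι X M : Type*}

theorem subsingleton_support_apply_of_pairwise_disjoint [Zero M] {f : ι → X → M}
    (hf : Pairwise (Disjoint on fun i => support (f i))) (x : X) :
    (support fun i => f i x).Subsingleton := by
  intro i hi j hj
  by_contra hij
  exact Set.disjoint_left.1 (hf hij) hi hj

theorem sum_eq_tsum_or_eq_zero_of_subsingleton_support [AddCommMonoid M] [TopologicalSpace M]
    {f : ι → M} (hf : (support f).Subsingleton) (s : Finset ι) :
    ∑ i ∈ s, f i = ∑' i, f i ∨ ∑ i ∈ s, f i = 0 ∧ ∃ i ∉ s, ∑' j, f j = f i := by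
  by_cases hs : support f ⊆ s
  · exact .inl (tsum_eq_sum' hs).symm
  · obtain ⟨i, hi, his⟩ := Set.not_subset.1 hs
    have eq_zero_of_ne : ∀ j ≠ i, f j = 0 := fun j hji =>
      notMem_support.1 fun hj => hji (hf hj hi)
    exact .inr ⟨Finset.sum_eq_zero fun j hj => eq_zero_of_ne j (ne_of_mem_of_not_mem hj his),
      i, his, tsum_eq_single i eq_zero_of_ne⟩

theorem hasSumUniformly_of_pairwise_disjoint_support [AddCommMonoid M] [UniformSpace M]
    {f : ι → X → M} (hdisj : Pairwise (Disjoint on fun i => support (f i)))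
    (hf : TendstoUniformly f 0 cofinite) : HasSumUniformly f fun x => ∑' i, f i x := by
  rw [hasSumUniformly_iff_tendstoUniformly]
  intro V hV
  have hfin : {i | ¬∀ x, (f i x, 0) ∈ V}.Finite := hf _ (symm_le_uniformity hV)
  filter_upwards [eventually_ge_atTop hfin.toFinset] with s hs x
  obtain hsum | ⟨hsum, i, his, htsum⟩ := sum_eq_tsum_or_eq_zero_of_subsingleton_support
    (subsingleton_support_apply_of_pairwise_disjoint hdisj x) s
  · rw [hsum]
    exact refl_mem_uniformity hV
  · have hi : ∀ x, (f i x, 0) ∈ V := by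
      by_contra hi
      exact his (hs (hfin.mem_toFinset.2 hi))
    rw [hsum, htsum]
    exact hi x

end DisjointSupport

section Smul

variable {ι 𝕜 E : Type*} [NormedField 𝕜] [SeminormedAddCommGroup E] [NormedSpace 𝕜 E]

theorem summable_norm_of_summable_norm_smul {c : ι → 𝕜} {v : ι → E} (hv : 0 < ⨅ i, ‖v i‖)
    (hcv : Summable fun i => ‖c i • v i‖) : Summable fun i => ‖c i‖ := by
  have iInf_le_norm (i : ι) : ⨅ i, ‖v i‖ ≤ ‖v i‖ :=
    ciInf_le ⟨0, Set.forall_mem_range.2 fun i => norm_nonneg (v i)⟩ i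
  rw [← summable_mul_right_iff hv.ne']
  refine hcv.of_nonneg_of_le (fun i => by positivity) fun i => ?_
  rw [norm_smul]
  gcongr
  exact iInf_le_norm i

theorem tendstoUniformly_smul_zero_of_bddAbove {X : Type*} [TopologicalSpace X] [CompactSpace X]
    {l : Filter ι} {c : ι → 𝕜} {u : ι → C(X, E)} (hc : Tendsto c l (𝓝 0))
    (hu : BddAbove (Set.range fun i => ‖u i‖)) :
    TendstoUniformly (fun i => ⇑(c i • u i)) 0 l :=
  ContinuousMap.tendsto_iff_tendstoUniformly.1 <|
    hc.zero_smul_isBoundedUnder_le hu.isBoundedUnder_of_range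

end Smul

open Function in
theorem stmt3_general {ι X 𝕜 E : Type*} [TopologicalSpace X] [CompactSpace X] [NormedField 𝕜]
    [SeminormedAddCommGroup E] [NormedSpace 𝕜 E] {u : ι → C(X, E)} {c : ι → 𝕜}
    (hdisj : Pairwise (Disjoint on fun i => support (u i)))
    (hinf : 0 < ⨅ i, ‖u i‖) (hbdd : BddAbove (Set.range fun i => ‖u i‖))
    (hc0 : Tendsto c cofinite (𝓝 0)) (hcl1 : ¬Summable fun i => ‖c i‖) :
    (∀ x, Summable fun i => ‖(c i • u i) x‖) ∧
      SummableUniformly (fun i => ⇑(c i • u i)) ∧ ¬Summable fun i => ‖c i • u i‖ := by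
  have hdisj_smul : Pairwise (Disjoint on fun i => support ⇑(c i • u i)) :=
    hdisj.mono fun i j hij => hij.mono (support_const_smul_subset (c i) (u i))
      (support_const_smul_subset (c j) (u j))
  refine ⟨fun x => ?_, ?_, fun hsum => hcl1 (summable_norm_of_summable_norm_smul hinf hsum)⟩
  · have hfin := (subsingleton_support_apply_of_pairwise_disjoint hdisj_smul x).finite
    exact summable_of_hasFiniteSupport <| hfin.subset <|
      support_comp_subset norm_zero fun i => (c i • u i) x
  · exact (hasSumUniformly_of_pairwise_disjoint_support hdisj_smul
      (tendstoUniformly_smul_zero_of_bddAbove hc0 hbdd)).summableUniformly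

theorem stmt3 (a b : ℝ) (hab : a < b) (u : ℕ → C(Set.Icc a b, ℝ))
    (hu : MemF a b u) (c : ℕ → ℝ)
    (hc0 : Tendsto c atTop (nhds 0)) (hcl1 : ¬ Summable fun n => |c n|) :
    AntiMW a b (fun n => c n • u n) := by
  obtain ⟨habs, ⟨S, hS⟩, hdiv⟩ := stmt3_general (𝕜 := ℝ)
    (fun i j hij => Set.disjoint_iff_inter_eq_empty.2 (hu.1 i j hij)) hu.2.1 hu.2.2
    (Nat.cofinite_eq_atTop ▸ hc0) hcl1
  exact ⟨habs, ⟨S, HasSumUniformly.tendstoUniformlyOn_finsetRange hS⟩, hdiv⟩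
end

section
/- Let [a,b] be a nondegenerate compact interval. There exists a linear map J : C([a,b]) → C([a,b])^ℕ such that: (i) J is an isometry into the uniformly bounded sequences, i.e. supₙ ‖(Jf)ₙ‖∞ = ‖f‖∞ for every f ∈ C([a,b]), and indeed ‖(Jf)ₙ‖∞ = ‖f‖∞ for every n; and (ii) for every f ≠ 0, the sequence Jf belongs to ℱ, i.e. the supports of the functions (Jf)ₙ are pairwise disjoint and 0 < infₙ ‖(Jf)ₙ‖∞ ≤ supₙ ‖(Jf)ₙ‖∞ < +∞. In particular J is injective and C([a,b]) is isometrically isomorphic to a linear subspace of ℓ∞(C([a,b])) contained in ℱ ∪ {0}. -/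
open Filter Topology

/-!
Choose pairwise disjoint open subintervals `Uₙ` of `[a,b]`, a compact nondegenerate interval
`Kₙ ⊆ Uₙ` in each, a continuous map `rₙ` of `[a,b]` to itself carrying `Kₙ` onto `[a,b]`, and a
Urysohn function `φₙ` that is `1` on `Kₙ` and vanishes off `Uₙ`. Then `(J f)ₙ = φₙ · (f ∘ rₙ)`
lives on `Uₙ` and already attains on `Kₙ` every value of `f`.
-/

open Function Set

section WeightedComposition

variable {X Y 𝕜 E : Type*} [TopologicalSpace X] [TopologicalSpace Y] [NormedField 𝕜]
  [NormedAddCommGroup E] [NormedSpace 𝕜 E]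

/-- The weighted composition operator `f ↦ φ · (f ∘ r)` with weight `φ` and symbol `r`, as a linear
map between spaces of continuous functions. -/
def weightedComp (φ : C(X, 𝕜)) (r : C(X, Y)) : C(Y, E) →ₗ[𝕜] C(X, E) where
  toFun f := φ • f.comp r
  map_add' f g := by ext x; exact smul_add (φ x) (f (r x)) (g (r x))
  map_smul' c f := by ext x; exact smul_comm (φ x) c (f (r x))

theorem weightedComp_apply (φ : C(X, 𝕜)) (r : C(X, Y)) (f : C(Y, E)) (x : X) :
    weightedComp φ r f x = φ x • f (r x) :=
  rfl

theorem support_weightedComp_subset (φ : C(X, 𝕜)) (r : C(X, Y)) (f : C(Y, E)) :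
    support (weightedComp φ r f) ⊆ support φ :=
  support_smul_subset_left φ (f ∘ r)

theorem norm_weightedComp [CompactSpace X] [CompactSpace Y] {φ : C(X, 𝕜)} {r : C(X, Y)}
    (hφ : ∀ x, ‖φ x‖ ≤ 1) (hr : SurjOn r {x | ‖φ x‖ = 1} univ) (f : C(Y, E)) :
    ‖weightedComp φ r f‖ = ‖f‖ := by
  apply le_antisymm
  · refine (ContinuousMap.norm_le _ (norm_nonneg f)).2 fun x => ?_
    calc ‖φ x • f (r x)‖ = ‖φ x‖ * ‖f (r x)‖ := norm_smul _ _
      _ ≤ 1 * ‖f‖ := by gcongr; exacts [hφ x, f.norm_coe_le_norm (r x)]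
      _ = ‖f‖ := one_mul _
  · refine (ContinuousMap.norm_le _ (norm_nonneg _)).2 fun y => ?_
    obtain ⟨x, hx : ‖φ x‖ = 1, rfl⟩ := hr (mem_univ y)
    calc ‖f (r x)‖ = ‖weightedComp φ r f x‖ := by
          rw [weightedComp_apply, norm_smul, hx, one_mul]
      _ ≤ ‖weightedComp φ r f‖ := ContinuousMap.norm_coe_le_norm _ x

end WeightedComposition

theorem exists_continuousMap_eq_one_support_subset {X : Type*} (𝕜 : Type*) [TopologicalSpace X]
    [NormalSpace X] [RCLike 𝕜] {K U : Set X} (hK : IsClosed K) (hU : IsOpen U) (hKU : K ⊆ U) :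
    ∃ φ : C(X, 𝕜), EqOn φ 1 K ∧ support φ ⊆ U ∧ ∀ x, ‖φ x‖ ≤ 1 := by
  obtain ⟨g, hg_zero, hg_one, hg_mem⟩ := exists_continuous_zero_one_of_isClosed
    hU.isClosed_compl hK (disjoint_compl_left_iff_subset.2 hKU)
  refine ⟨⟨fun x => (g x : 𝕜), by fun_prop⟩, fun x hx => ?_, fun x hx => ?_, fun x => ?_⟩
  · simp [hg_one hx]
  · by_contra hxU
    exact hx (by simp [hg_zero hxU])
  · simpa [abs_of_nonneg (hg_mem x).1] using (hg_mem x).2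

theorem exists_linearMap_norm_eq_disjoint_support {ι X Y 𝕜 E : Type*} [TopologicalSpace X]
    [CompactSpace X] [NormalSpace X] [TopologicalSpace Y] [CompactSpace Y] [RCLike 𝕜]
    [NormedAddCommGroup E] [NormedSpace 𝕜 E] {K U : ι → Set X} (hK : ∀ i, IsClosed (K i))
    (hU : ∀ i, IsOpen (U i)) (hKU : ∀ i, K i ⊆ U i) (hU_disj : Pairwise (Disjoint on U))
    {r : ι → C(X, Y)} (hr : ∀ i, SurjOn (r i) (K i) univ) :
    ∃ J : C(Y, E) →ₗ[𝕜] (ι → C(X, E)),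
      (∀ f i, ‖J f i‖ = ‖f‖) ∧ ∀ f, Pairwise (Disjoint on fun i => support (J f i)) := by
  choose φ hφ_one hφ_supp hφ_le using fun i =>
    exists_continuousMap_eq_one_support_subset 𝕜 (hK i) (hU i) (hKU i)
  have supp_subset (f : C(Y, E)) (i : ι) : support (weightedComp (φ i) (r i) f) ⊆ U i :=
    (support_weightedComp_subset _ _ f).trans (hφ_supp i)
  have norm_one_on (i : ι) : K i ⊆ {x | ‖φ i x‖ = 1} := fun x hx => by simp [hφ_one i hx]
  refine ⟨LinearMap.pi fun i => weightedComp (φ i) (r i), fun f i => ?_, fun f i j hij => ?_⟩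
  · exact norm_weightedComp (hφ_le i) ((hr i).mono (norm_one_on i) subset_rfl) f
  · exact (hU_disj hij).mono (supp_subset f i) (supp_subset f j)

theorem exists_continuousMap_surjOn_Icc {a b s t : ℝ} (hab : a < b) (hst : s < t) :
    ∃ r : C(ℝ, Icc a b), SurjOn r (Icc s t) univ := by
  let e : Icc s t ≃ₜ Icc a b := (iccHomeoI s t hst).trans (iccHomeoI a b hab).symm
  refine ⟨⟨e ∘ projIcc s t hst.le, e.continuous.comp continuous_projIcc⟩, ?_⟩
  exact e.surjective.surjOn.comp (projIcc_surjOn hst.le)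

theorem exists_Icc_subset_pairwise_disjoint_Ioo {a b : ℝ} (hab : a < b) :
    ∃ c d s t : ℕ → ℝ, Pairwise (Disjoint on fun n => Ioo (c n) (d n)) ∧
      ∀ n, s n < t n ∧ Icc (s n) (t n) ⊆ Ioo (c n) (d n) ∩ Icc a b := by
  obtain ⟨u, hu_anti, hu_mem, -⟩ := exists_seq_strictAnti_tendsto' hab
  choose s hus hsu using fun n : ℕ => exists_between (hu_anti n.lt_succ_self)
  choose t hst htu using fun n => exists_between (hsu n)
  refine ⟨fun n => u (n + 1), u, s, t, hu_anti.antitone.pairwise_disjoint_on_Ioo_succ,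
    fun n => ⟨hst n, subset_inter (Icc_subset_Ioo (hus n) (htu n)) (Icc_subset_Icc ?_ ?_)⟩⟩
  · exact ((hu_mem (n + 1)).1.trans (hus n)).le
  · exact ((htu n).trans (hu_mem n).2).le

theorem injective_of_norm_apply_eq {ι 𝕜 F G : Type*} [Semiring 𝕜] [NormedAddCommGroup F]
    [SeminormedAddCommGroup G] [Module 𝕜 F] [Module 𝕜 G] {J : F →ₗ[𝕜] (ι → G)} (i : ι)
    (hJ : ∀ f, ‖J f i‖ = ‖f‖) : Injective J := by
  refine (injective_iff_map_eq_zero J).2 fun f hf => norm_eq_zero.1 ?_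
  rw [← hJ f, hf, Pi.zero_apply, norm_zero]

theorem memF_of_norm_eq {a b c : ℝ} {u : ℕ → C(Icc a b, ℝ)} (hc : 0 < c) (hu : ∀ n, ‖u n‖ = c)
    (hu_disj : Pairwise (Disjoint on fun n => support (u n))) : MemF a b u := by
  refine ⟨fun n m hnm => (hu_disj hnm).inter_eq, ?_, ?_⟩
  · simpa only [hu, ciInf_const] using hc
  · exact ⟨c, forall_mem_range.2 fun n => (hu n).le⟩

theorem stmt4_general (𝕜 E : Type*) [RCLike 𝕜] [NormedAddCommGroup E] [NormedSpace 𝕜 E]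
    {a b : ℝ} (hab : a < b) :
    ∃ J : C(Icc a b, E) →ₗ[𝕜] (ℕ → C(Icc a b, E)),
      (∀ f n, ‖J f n‖ = ‖f‖) ∧
      (∀ f, Pairwise (Disjoint on fun n => support (J f n))) ∧
      Injective J := by
  obtain ⟨c, d, s, t, h_disj, h_cells⟩ := exists_Icc_subset_pairwise_disjoint_Ioo hab
  choose r hr using fun n => exists_continuousMap_surjOn_Icc hab (h_cells n).1
  let ρ (n : ℕ) : C(Icc a b, Icc a b) := (r n).restrict (Icc a b)
  have hρ (n : ℕ) : SurjOn (ρ n) (Subtype.val ⁻¹' Icc (s n) (t n)) univ := fun y _ => by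
    obtain ⟨x, hx, rfl⟩ := hr n (mem_univ y)
    exact ⟨⟨x, ((h_cells n).2 hx).2⟩, hx, rfl⟩
  obtain ⟨J, hJ_norm, hJ_disj⟩ := exists_linearMap_norm_eq_disjoint_support (𝕜 := 𝕜) (E := E)
    (fun n => isClosed_Icc.preimage continuous_subtype_val)
    (fun n => isOpen_Ioo.preimage continuous_subtype_val)
    (fun n x hx => ((h_cells n).2 hx).1) (fun n m hnm => (h_disj hnm).preimage _) hρ
  exact ⟨J, hJ_norm, hJ_disj, injective_of_norm_apply_eq 0 fun f => hJ_norm f 0⟩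

theorem stmt4 (a b : ℝ) (hab : a < b) :
    ∃ J : C(Set.Icc a b, ℝ) →ₗ[ℝ] (ℕ → C(Set.Icc a b, ℝ)),
      (∀ f : C(Set.Icc a b, ℝ), ∀ n : ℕ, ‖J f n‖ = ‖f‖) ∧
      (∀ f : C(Set.Icc a b, ℝ), f ≠ 0 → MemF a b (J f)) ∧
      Function.Injective J := by
  obtain ⟨J, hJ_norm, hJ_disj, hJ_inj⟩ := stmt4_general ℝ ℝ hab
  refine ⟨J, hJ_norm, fun f hf => ?_, hJ_inj⟩
  exact memF_of_norm_eq (norm_pos_iff.2 hf) (hJ_norm f) (hJ_disj f)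
end

section
/- Let [a,b] be a nondegenerate compact interval, let M be a linear subspace of the space of real sequences such that M \ {0} ⊂ c₀ \ ℓ₁, and let (uₙ)_{n≥1} ∈ ℱ. Then the set 𝓜 := { (aₙ uₙ)ₙ : (aₙ)ₙ ∈ M } is a linear subspace of C([a,b])^ℕ, the map (aₙ)ₙ ↦ (aₙuₙ)ₙ is an injective linear map from M onto 𝓜 (so 𝓜 has the same dimension as M), and 𝓜 \ {0} ⊂ 𝒜ℳ𝒲. -/
open Filter Topology

/-!
At each point at most one `uₙ` is nonzero, so the series `∑ cₙ uₙ(x)` has at most one nonzero term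
and every tail of it is a single later term. Hence uniform convergence of the series only requires
`‖cₙ uₙ‖ → 0`, which `cₙ → 0` provides, whereas `∑ ‖cₙ uₙ‖` is comparable to the divergent `∑ |cₙ|`.
-/

section DisjointSupports

variable {ι X E : Type*}

theorem subsingleton_support_apply [Zero E] {f : ι → X → E}
    (hf : Pairwise fun i j => Disjoint (Function.support (f i)) (Function.support (f j))) (x : X) :
    (Function.support fun i => f i x).Subsingleton := by
  intro i hi j hj
  by_contra hij
  exact Set.disjoint_left.1 (hf hij) hi hj

theorem exists_ge_tsum_sub_sum_range_eq [AddCommGroup E] [TopologicalSpace E] {g : ℕ → E}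
    (hg : (Function.support g).Subsingleton) (N : ℕ) :
    ∃ m ≥ N, ∑' n, g n - ∑ n ∈ Finset.range N, g n = g m := by
  by_cases hlate : ∃ m ≥ N, g m ≠ 0
  · obtain ⟨m, hNm, hm⟩ := hlate
    have hzero : ∀ n ≠ m, g n = 0 := fun n hnm => by_contra fun hn => hnm (hg hn hm)
    have hpartial : ∑ n ∈ Finset.range N, g n = 0 :=
      Finset.sum_eq_zero fun n hn => hzero n (by grind)
    exact ⟨m, hNm, by rw [tsum_eq_single m hzero, hpartial, sub_zero]⟩
  · push Not at hlate
    have htsum : ∑' n, g n = ∑ n ∈ Finset.range N, g n :=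
      tsum_eq_sum fun n hn => hlate n (by simpa using hn)
    exact ⟨N, le_rfl, by rw [htsum, sub_self, hlate N le_rfl]⟩

variable [SeminormedAddCommGroup E]

theorem summable_norm_apply_of_disjoint_support {f : ι → X → E}
    (hf : Pairwise fun i j => Disjoint (Function.support (f i)) (Function.support (f j))) (x : X) :
    Summable fun i => ‖f i x‖ :=
  summable_of_hasFiniteSupport <| (subsingleton_support_apply hf x).finite.subset <|
    Function.support_comp_subset norm_zero fun i => f i x

theorem tendstoUniformly_sum_range_of_disjoint_support {f : ℕ → X → E}
    (hf : Pairwise fun i j => Disjoint (Function.support (f i)) (Function.support (f j)))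
    (hlim : TendstoUniformly f 0 atTop) :
    TendstoUniformly (fun N x => ∑ n ∈ Finset.range N, f n x) (fun x => ∑' n, f n x) atTop := by
  rw [Metric.tendstoUniformly_iff] at hlim ⊢
  intro ε hε
  obtain ⟨N₀, hsmall⟩ := eventually_atTop.1 (hlim ε hε)
  filter_upwards [eventually_ge_atTop N₀] with N hN x
  obtain ⟨m, hNm, htail⟩ :=
    exists_ge_tsum_sub_sum_range_eq (subsingleton_support_apply hf x) N
  rw [dist_eq_norm, htail]
  simpa using hsmall m (hN.trans hNm) x

end DisjointSupports

theorem iInf_norm_le {ι E : Type*} [SeminormedAddGroup E] (u : ι → E) (i : ι) :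
    ⨅ j, ‖u j‖ ≤ ‖u i‖ :=
  ciInf_le ⟨0, Set.forall_mem_range.2 fun j => norm_nonneg (u j)⟩ i

theorem summable_norm_of_summable_norm_smul_s5 {ι 𝕜 E : Type*} [NormedField 𝕜]
    [SeminormedAddCommGroup E] [NormedSpace 𝕜 E] {c : ι → 𝕜} {u : ι → E} {δ : ℝ} (hδ : 0 < δ)
    (hu : ∀ i, δ ≤ ‖u i‖) (hcu : Summable fun i => ‖c i • u i‖) : Summable fun i => ‖c i‖ := by
  refine .of_nonneg_of_le (fun i => norm_nonneg _) (fun i => ?_) (hcu.mul_right δ⁻¹)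
  rw [← div_eq_mul_inv, le_div_iff₀ hδ, norm_smul]
  gcongr
  exact hu i

/-- The linear map `(cᵢ) ↦ (cᵢ uᵢ)` sending a family of scalars to the family of multiples of fixed
vectors `uᵢ`; its restriction to `M` parametrizes the space `𝓜`. -/
def smulFamily {ι E : Type*} (R : Type*) [Semiring R] [AddCommMonoid E] [Module R E] (u : ι → E) :
    (ι → R) →ₗ[R] (ι → E) :=
  LinearMap.piMap fun i => LinearMap.toSpanSingleton R E (u i)

theorem smulFamily_injective {ι R E : Type*} [Ring R] [IsDomain R] [AddCommGroup E] [Module R E]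
    [Module.IsTorsionFree R E] {u : ι → E} (hu : ∀ i, u i ≠ 0) :
    Function.Injective (smulFamily R u) :=
  Function.Injective.piMap fun i => smul_left_injective R (hu i)

section AntiMWeierstrass

variable {X 𝕜 E : Type*} [TopologicalSpace X] [CompactSpace X] [NormedField 𝕜]
  [NormedAddCommGroup E] [NormedSpace 𝕜 E]

/-- Anti M-Weierstrass sequences of continuous functions on a compact space with values in a
normed group; on `[a, b]` with real values this unfolds to `AntiMW`. -/
def IsAntiMWeierstrass (f : ℕ → C(X, E)) : Prop :=
  (∀ x, Summable fun n => ‖f n x‖) ∧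
  (∃ S : X → E, TendstoUniformly (fun N x => ∑ n ∈ Finset.range N, f n x) S atTop) ∧
  ¬ Summable fun n => ‖f n‖

theorem isAntiMWeierstrass_smul {c : ℕ → 𝕜} (hc : Tendsto c atTop (𝓝 0))
    (hc_sum : ¬ Summable fun n => ‖c n‖) {u : ℕ → C(X, E)}
    (hdisj : Pairwise fun n m => Disjoint (Function.support (u n)) (Function.support (u m)))
    {δ : ℝ} (hδ : 0 < δ) (hlower : ∀ n, δ ≤ ‖u n‖) (hupper : BddAbove (Set.range fun n => ‖u n‖)) :
    IsAntiMWeierstrass fun n => c n • u n := by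
  have hdisj_smul : Pairwise fun n m =>
      Disjoint (Function.support (c n • u n)) (Function.support (c m • u m)) := fun n m hnm =>
    (hdisj hnm).mono (Function.support_const_smul_subset _ _)
      (Function.support_const_smul_subset _ _)
  have hlim : Tendsto (fun n => c n • u n) atTop (𝓝 0) :=
    hc.zero_smul_isBoundedUnder_le hupper.isBoundedUnder_of_range
  exact ⟨summable_norm_apply_of_disjoint_support hdisj_smul,
    ⟨_, tendstoUniformly_sum_range_of_disjoint_support hdisj_smul
      (ContinuousMap.tendsto_iff_tendstoUniformly.1 hlim)⟩,
    fun h => hc_sum (summable_norm_of_summable_norm_smul_s5 hδ hlower h)⟩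

end AntiMWeierstrass

universe v w z

theorem stmt5_general {X : Type v} {E : Type w} {𝕜 : Type z} [TopologicalSpace X] [CompactSpace X]
    [NormedField 𝕜] [NormedAddCommGroup E] [NormedSpace 𝕜 E] (M : Submodule 𝕜 (ℕ → 𝕜))
    (hM : ∀ c ∈ M, c ≠ 0 → Tendsto c atTop (𝓝 0) ∧ ¬ Summable fun n => ‖c n‖)
    {u : ℕ → C(X, E)}
    (hdisj : Pairwise fun n m => Disjoint (Function.support (u n)) (Function.support (u m)))
    {δ : ℝ} (hδ : 0 < δ) (hlower : ∀ n, δ ≤ ‖u n‖) (hupper : BddAbove (Set.range fun n => ‖u n‖)) :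
    ∃ 𝓜 : Submodule 𝕜 (ℕ → C(X, E)),
      (𝓜 : Set (ℕ → C(X, E))) = {F | ∃ c ∈ M, F = fun n => c n • u n} ∧
      Set.InjOn (fun c : ℕ → 𝕜 => fun n => c n • u n) M ∧
      Cardinal.lift.{z} (Module.rank 𝕜 𝓜) = Cardinal.lift.{max v w} (Module.rank 𝕜 M) ∧
      ∀ F ∈ 𝓜, F ≠ 0 → IsAntiMWeierstrass F := by
  have hinj : Function.Injective (smulFamily 𝕜 u) :=
    smulFamily_injective fun n => norm_pos_iff.1 (hδ.trans_le (hlower n))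
  refine ⟨M.map (smulFamily 𝕜 u), ?_, hinj.injOn,
    (Submodule.equivMapOfInjective _ hinj M).lift_rank_eq.symm, ?_⟩
  · ext F
    exact exists_congr fun c => and_congr_right fun _ => eq_comm
  · rintro F ⟨c, hcM, rfl⟩ hF
    have hc : c ≠ 0 := fun hzero => hF (by rw [hzero, map_zero])
    obtain ⟨hlim, hsum⟩ := hM c hcM hc
    exact isAntiMWeierstrass_smul hlim hsum hdisj hδ hlower hupper

theorem MemF.pairwise_disjoint_support {a b : ℝ} {u : ℕ → C(Set.Icc a b, ℝ)} (hu : MemF a b u) :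
    Pairwise fun n m => Disjoint (Function.support (u n)) (Function.support (u m)) :=
  fun n m hnm => Set.disjoint_iff_inter_eq_empty.2 (hu.1 n m hnm)

theorem stmt5 (a b : ℝ) (hab : a < b) (M : Submodule ℝ (ℕ → ℝ))
    (hM : ∀ c ∈ M, c ≠ 0 →
      Tendsto c atTop (nhds 0) ∧ ¬ Summable fun n => |c n|)
    (u : ℕ → C(Set.Icc a b, ℝ)) (hu : MemF a b u) :
    ∃ 𝓜 : Submodule ℝ (ℕ → C(Set.Icc a b, ℝ)),
      (𝓜 : Set (ℕ → C(Set.Icc a b, ℝ))) =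
        {F | ∃ c ∈ M, F = fun n => c n • u n} ∧
      Set.InjOn (fun c : ℕ → ℝ => fun n => c n • u n) M ∧
      Module.rank ℝ 𝓜 = Module.rank ℝ M ∧
      ∀ F ∈ 𝓜, F ≠ 0 → AntiMW a b F := by
  simpa only [Cardinal.lift_id] using!
    stmt5_general M hM hu.pairwise_disjoint_support hu.2.1 (iInf_norm_le u) hu.2.2
end

section
/- Let (aₙ)_{n≥1} be a real sequence with aₙ → 0 such that ∑ₙ |aₙ|^p = +∞ for every p ≥ 1, and let P be a nonzero real polynomial in one variable with P(0) = 0. Then the sequence (P(aₙ))ₙ converges to 0 and ∑ₙ |P(aₙ)| = +∞, i.e. (P(aₙ))ₙ ∈ c₀ \ ℓ₁. -/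
open Filter Topology

/-!
Near a root `c` of multiplicity `k`, a nonzero polynomial `P` is asymptotic to a nonzero multiple
of `(x - c) ^ k`. Hence, along a family tending to `c`, the values of `P` are absolutely summable
only if the `k`-th powers of the distances to `c` are summable.
-/

open Asymptotics Polynomial

section NormedField

variable {ι 𝕜 : Type*} [NormedField 𝕜] {P : 𝕜[X]} {c : 𝕜}

theorem isEquivalent_eval_nhds (hP : P ≠ 0) (c : 𝕜) :
    (fun x => P.eval x) ~[𝓝 c] fun x => (x - c) ^ P.rootMultiplicity c *
      (P /ₘ (X - C c) ^ P.rootMultiplicity c).eval c := by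
  set Q := P /ₘ (X - C c) ^ P.rootMultiplicity c
  have hP_eval (x : 𝕜) : P.eval x = (x - c) ^ P.rootMultiplicity c * Q.eval x := by
    simpa using congrArg (eval x) (P.pow_mul_divByMonic_rootMultiplicity_eq c).symm
  have hQ : (fun x => Q.eval x) ~[𝓝 c] fun _ => Q.eval c :=
    (isEquivalent_const_iff_tendsto (eval_divByMonic_pow_rootMultiplicity_ne_zero c hP)).mpr
      (Q.continuous.tendsto c)
  simp only [hP_eval]
  exact IsEquivalent.refl.mul hQ

theorem summable_norm_eval_iff_summable_norm_sub_pow {a : ι → 𝕜}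
    (ha : Tendsto a cofinite (𝓝 c)) (hP : P ≠ 0) :
    (Summable fun i => ‖P.eval (a i)‖) ↔
      Summable fun i => ‖a i - c‖ ^ P.rootMultiplicity c := by
  set q := (P /ₘ (X - C c) ^ P.rootMultiplicity c).eval c
  have hq_norm : ‖q‖ ≠ 0 := norm_ne_zero_iff.mpr (eval_divByMonic_pow_rootMultiplicity_ne_zero c hP)
  calc (Summable fun i => ‖P.eval (a i)‖)
    _ ↔ Summable fun i => ‖(a i - c) ^ P.rootMultiplicity c * q‖ :=
      ((isEquivalent_eval_nhds hP c).comp_tendsto ha).isTheta.norm_left.norm_right.summable_iff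
    _ ↔ Summable fun i => ‖a i - c‖ ^ P.rootMultiplicity c := by
      simp only [norm_mul, norm_pow, summable_mul_right_iff hq_norm]

theorem stmt13_general {a : ι → 𝕜} (ha : Tendsto a cofinite (𝓝 c)) (hP : P ≠ 0)
    (hPc : P.IsRoot c) (hap : ¬ Summable fun i => ‖a i - c‖ ^ P.rootMultiplicity c) :
    Tendsto (fun i => P.eval (a i)) cofinite (𝓝 0) ∧ ¬ Summable fun i => ‖P.eval (a i)‖ :=
  ⟨hPc.eq_zero ▸ (P.continuous.tendsto c).comp ha,
    (summable_norm_eval_iff_summable_norm_sub_pow ha hP).not.mpr hap⟩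

end NormedField

theorem stmt13 (a : ℕ → ℝ) (ha0 : Tendsto a atTop (nhds 0))
    (hap : ∀ p : ℝ, 1 ≤ p → ¬ Summable fun n => |a n| ^ p)
    (P : Polynomial ℝ) (hP : P ≠ 0) (hP0 : P.eval 0 = 0) :
    Tendsto (fun n => P.eval (a n)) atTop (nhds 0) ∧
    ¬ Summable fun n => |P.eval (a n)| := by
  have hk : 1 ≤ (P.rootMultiplicity 0 : ℝ) := mod_cast (rootMultiplicity_pos hP).mpr hP0
  rw [← Nat.cofinite_eq_atTop] at ha0 ⊢
  exact stmt13_general ha0 hP hP0 (by simpa using hap _ hk)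
end

section
/- Let [a,b] be a nondegenerate compact interval. Let (aₙ)_{n≥1} be a real sequence with aₙ → 0 and ∑ₙ |aₙ|^p = +∞ for all p ≥ 1, and let {gᵢ}_{i∈I} be a family generating a free algebra in C([a,b]). Then there exists a family {(uₙⁱ)ₙ}_{i∈I} of sequences in C([a,b])^ℕ such that the family { (aₙuₙⁱ)ₙ : i ∈ I } generates a free algebra 𝒜 in C([a,b])^ℕ (with coordinatewise operations) satisfying 𝒜 \ {0} ⊂ 𝒜ℳ𝒲; that is, for every N ∈ ℕ, every nonzero real polynomial P in N variables with zero constant term, and all pairwise distinct i₁,…,i_N ∈ I, the sequence P((aₙuₙ^{i₁})ₙ, …, (aₙuₙ^{i_N})ₙ) is a nonzero element of 𝒜ℳ𝒲. -/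
open Filter Topology

/-- A family in a commutative real algebra generates a free algebra. -/
def GeneratesFreeAlgebra {A : Type*} [CommRing A] [Algebra ℝ A]
    {I : Type*} (g : I → A) : Prop :=
  ∀ (N : ℕ) (P : MvPolynomial (Fin N) ℝ), P ≠ 0 → MvPolynomial.coeff 0 P = 0 →
    ∀ v : Fin N → I, Function.Injective v →
      MvPolynomial.aeval (fun k => g (v k)) P ≠ 0

/-!
Functions vanishing at the endpoints and squeezed into pairwise disjoint intervals, one into each,
have a uniformly convergent sum as soon as their sup norms tend to zero, however slowly. So multiply
each `g i` by a function `h` vanishing exactly at the endpoints, and let `u i n` be `h * g i`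
squeezed into the `n`-th interval. Then `P (c n • u)` is `P (c n • (h * g))` squeezed, whose norm
tends to zero because `P` has no constant term. Splitting `P` into homogeneous components `P_d`,

`P (t • (h * g)) = ∑ d, t ^ d • (h ^ d * P_d g)`.

Freeness of `g` makes some `P_d g`, hence some coefficient, nonzero; if `m ≥ 1` is the least index
of such a coefficient, then the norm is at least of order `|t| ^ m` as `t → 0`, and
`∑ |c n| ^ m = ∞`.
-/

open Function Set MvPolynomial

section Homogeneous

variable {σ R A : Type*} [CommSemiring R] [CommSemiring A] [Algebra R A]

lemma aeval_const_mul_of_isHomogeneous {φ : MvPolynomial σ R} {d : ℕ} (hφ : φ.IsHomogeneous d)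
    (h : A) (w : σ → A) : aeval (fun k => h * w k) φ = h ^ d * aeval w φ := by
  simp only [aeval_def, eval₂_eq, Finset.mul_sum]
  refine Finset.sum_congr rfl fun s hs => ?_
  have hdeg : ∑ k ∈ s.support, s k = d := by
    rw [← Finsupp.degree_apply, Finsupp.degree_eq_weight_one]
    exact hφ (mem_support_iff.1 hs)
  simp only [mul_pow, Finset.prod_mul_distrib, Finset.prod_pow_eq_pow_sum, hdeg]
  ring

lemma aeval_smul_eq_sum_homogeneousComponent (P : MvPolynomial σ R) (t : R) (w : σ → A) :
    aeval (fun k => t • w k) P =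
      ∑ d ∈ Finset.range (P.totalDegree + 1), t ^ d • aeval w (homogeneousComponent d P) := by
  conv_lhs => rw [← sum_homogeneousComponent P, map_sum]
  simp only [Algebra.smul_def, map_pow,
    aeval_const_mul_of_isHomogeneous (homogeneousComponent_isHomogeneous _ P)]

lemma exists_homogeneousComponent_ne_zero {P : MvPolynomial σ R} (hP : P ≠ 0) :
    ∃ d, homogeneousComponent d P ≠ 0 := by
  contrapose! hP
  rw [← sum_homogeneousComponent P]
  exact Finset.sum_eq_zero fun d _ => hP d

end Homogeneous

lemma GeneratesFreeAlgebra.exists_aeval_mul_homogeneousComponent_ne_zero {A : Type*} [CommRing A]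
    [Algebra ℝ A] {I : Type*} {g : I → A} (hg : GeneratesFreeAlgebra g) {h : A}
    (hh : h ∈ nonZeroDivisors A) {N : ℕ} {P : MvPolynomial (Fin N) ℝ} (hP : P ≠ 0)
    (hP0 : coeff 0 P = 0) {v : Fin N → I} (hv : Injective v) :
    ∃ d, aeval (fun k => h * g (v k)) (homogeneousComponent d P) ≠ 0 := by
  obtain ⟨d, hd⟩ := exists_homogeneousComponent_ne_zero hP
  have hd0 : coeff 0 (homogeneousComponent d P) = 0 := by
    rw [coeff_homogeneousComponent, hP0, ite_self]
  refine ⟨d, ?_⟩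
  rw [aeval_const_mul_of_isHomogeneous (homogeneousComponent_isHomogeneous d P),
    Ne, mul_left_mem_nonZeroDivisors_eq_zero_iff (pow_mem hh d)]
  exact hg N _ hd hd0 v hv

section Asymptotics

variable {𝕜 : Type*} [NormedField 𝕜]

lemma exists_pow_isBigO_sum_pow_smul {E : Type*} [NormedAddCommGroup E] [NormedSpace 𝕜 E]
    {e : ℕ → E} {n d : ℕ} (hdn : d < n) (hd : e d ≠ 0) :
    ∃ m, e m ≠ 0 ∧
      (fun t : 𝕜 => t ^ m) =O[𝓝 0] fun t => ∑ k ∈ Finset.range n, t ^ k • e k := by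
  classical
  have hex : ∃ k, e k ≠ 0 := ⟨d, hd⟩
  obtain ⟨m, hm, hmin⟩ : ∃ m, e m ≠ 0 ∧ ∀ k < m, e k = 0 :=
    ⟨Nat.find hex, Nat.find_spec hex, fun k hk => not_not.1 (Nat.find_min hex hk)⟩
  have hmn : m < n := (not_lt.1 fun h => hd (hmin d h)).trans_lt hdn
  -- The truncated subtraction is harmless: the terms with `k < m` vanish.
  let q : 𝕜 → E := fun t => ∑ k ∈ Finset.range n, t ^ (k - m) • e k
  have hfactor (t : 𝕜) : ∑ k ∈ Finset.range n, t ^ k • e k = t ^ m • q t := by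
    simp only [q, Finset.smul_sum]
    refine Finset.sum_congr rfl fun k _ => ?_
    rcases lt_or_ge k m with hk | hk
    · simp [hmin k hk]
    · rw [smul_smul, ← pow_add, Nat.add_sub_cancel' hk]
  have hq0 : q 0 = e m := by
    refine (Finset.sum_eq_single_of_mem m (Finset.mem_range.2 hmn) fun k _ hk => ?_).trans (by simp)
    rcases hk.lt_or_gt with hk | hk
    · simp [hmin k hk]
    · simp [Nat.sub_ne_zero_of_lt hk]
  have hq : Continuous q := by fun_prop
  have hone : (fun _ => 1 : 𝕜 → 𝕜) =O[𝓝 0] q :=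
    (Asymptotics.isBigO_const_const 1 hm _).trans
      ((Asymptotics.isEquivalent_const_iff_tendsto hm).2 (hq.tendsto' 0 _ hq0)).symm.isBigO
  refine ⟨m, hm, ?_⟩
  simp only [hfactor]
  simpa using (Asymptotics.isBigO_refl (fun t : 𝕜 => t ^ m) (𝓝 0)).smul hone

variable {σ A : Type*} [NormedCommRing A] [NormedAlgebra 𝕜 A] {P : MvPolynomial σ 𝕜}

lemma tendsto_aeval_smul_zero (hP0 : coeff 0 P = 0) (w : σ → A) :
    Tendsto (fun t : 𝕜 => aeval (fun k => t • w k) P) (𝓝 0) (𝓝 0) := by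
  have hcont : Continuous fun t : 𝕜 => aeval (fun k => t • w k) P := by
    simp only [aeval_smul_eq_sum_homogeneousComponent]
    fun_prop
  refine (hcont.tendsto 0).trans_eq ?_
  simp [constantCoeff_eq, hP0]

lemma exists_pow_isBigO_aeval_smul (hP0 : coeff 0 P = 0) {w : σ → A} {d : ℕ}
    (hd : aeval w (homogeneousComponent d P) ≠ 0) :
    ∃ m, 1 ≤ m ∧ (fun t : 𝕜 => t ^ m) =O[𝓝 0] fun t => aeval (fun k => t • w k) P := by
  have hdeg : d < P.totalDegree + 1 := by
    contrapose! hd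
    rw [homogeneousComponent_eq_zero d P hd, map_zero]
  obtain ⟨m, hm, hO⟩ := exists_pow_isBigO_sum_pow_smul (𝕜 := 𝕜)
    (e := fun d => aeval w (homogeneousComponent d P)) hdeg hd
  refine ⟨m, Nat.one_le_iff_ne_zero.2 ?_, ?_⟩
  · rintro rfl
    exact hm (by simp [hP0])
  · simpa only [aeval_smul_eq_sum_homogeneousComponent] using hO

lemma not_summable_norm_aeval_smul (hP0 : coeff 0 P = 0) {w : σ → A} {d : ℕ}
    (hd : aeval w (homogeneousComponent d P) ≠ 0) {c : ℕ → 𝕜} (hc0 : Tendsto c atTop (𝓝 0))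
    (hc : ∀ m : ℕ, 1 ≤ m → ¬ Summable fun n => ‖c n‖ ^ m) :
    ¬ Summable fun n => ‖aeval (fun k => c n • w k) P‖ := by
  intro hsum
  obtain ⟨m, hm, hO⟩ := exists_pow_isBigO_aeval_smul hP0 hd
  refine hc m hm (summable_of_isBigO_nat hsum ?_)
  simpa only [norm_pow, comp_def] using (hO.comp_tendsto hc0).norm_norm

end Asymptotics

section DisjointSupports

variable {X E : Type*}

lemma subsingleton_support_apply_of_pairwise_disjoint_support {ι : Type*} [Zero E] {f : ι → X → E}
    (hf : Pairwise (Disjoint on fun n => support (f n))) (x : X) :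
    (support fun n => f n x).Subsingleton := fun m hm n hn => by
  by_contra hmn
  exact (hf hmn).le_bot ⟨hm, hn⟩

lemma tendstoUniformly_sum_range_of_pairwise_disjoint_support [NormedAddCommGroup E]
    {f : ℕ → X → E}
    (hf : Pairwise (Disjoint on fun n => support (f n))) (hf0 : TendstoUniformly f 0 atTop) :
    TendstoUniformly (fun N x => ∑ n ∈ Finset.range N, f n x) (fun x => ∑' n, f n x) atTop := by
  rw [Metric.tendstoUniformly_iff] at hf0 ⊢
  intro ε hε
  obtain ⟨M, hM⟩ := eventually_atTop.1 (hf0 ε hε)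
  filter_upwards [eventually_ge_atTop M] with N hN x
  obtain hx | ⟨k, hx⟩ :=
    (subsingleton_support_apply_of_pairwise_disjoint_support hf x).eq_empty_or_singleton
  · have hzero (n : ℕ) : f n x = 0 := congrFun (support_eq_empty_iff.1 hx) n
    simpa [hzero] using hε
  have hzero (n : ℕ) (hn : n ≠ k) : f n x = 0 := support_subset_iff'.1 hx.subset n hn
  rw [tsum_eq_single k hzero]
  rcases lt_or_ge k N with hk | hk
  · rw [Finset.sum_eq_single_of_mem k (Finset.mem_range.2 hk) fun n _ => hzero n]
    simpa using hε
  · rw [Finset.sum_eq_zero fun n hn => hzero n ((Finset.mem_range.1 hn).trans_le hk).ne]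
    simpa [dist_comm] using hM k (hN.trans hk) x

end DisjointSupports

section ContinuousMap

lemma norm_continuousMap_comp_of_surjective {X Y E : Type*} [TopologicalSpace X] [CompactSpace X]
    [TopologicalSpace Y] [CompactSpace Y] [SeminormedAddCommGroup E] (f : C(Y, E)) {ψ : C(X, Y)}
    (hψ : Surjective ψ) : ‖f.comp ψ‖ = ‖f‖ := by
  rw [ContinuousMap.norm_eq_iSup_norm, ContinuousMap.norm_eq_iSup_norm]
  exact hψ.iSup_comp fun y => ‖f y‖

variable {X R : Type*} [TopologicalSpace X] [CommSemiring R] [TopologicalSpace R]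
  [IsTopologicalSemiring R]

lemma mem_nonZeroDivisors_of_dense_support [T2Space R] [NoZeroDivisors R] {h : C(X, R)}
    (hh : Dense (support h)) : h ∈ nonZeroDivisors C(X, R) := by
  refine mem_nonZeroDivisors_iff_right.2 fun f hfh => DFunLike.coe_injective ?_
  refine f.continuous.ext_on hh continuous_zero fun x hx => ?_
  exact (mul_eq_zero.1 (DFunLike.congr_fun hfh x)).resolve_right hx

lemma aeval_continuousMap_comp {Y σ : Type*} [TopologicalSpace Y] (P : MvPolynomial σ R)
    (f : σ → C(Y, R)) (ψ : C(X, Y)) : aeval (fun k => (f k).comp ψ) P = (aeval f P).comp ψ :=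
  (comp_aeval_apply f (ContinuousMap.compRightAlgHom R R ψ) P).symm

lemma support_aeval_smul_mul_subset {σ : Type*} {P : MvPolynomial σ R} (hP0 : coeff 0 P = 0)
    (t : R) (h : C(X, R)) (f : σ → C(X, R)) :
    support (aeval (fun k => t • (h * f k)) P) ⊆ support h := by
  refine support_subset_iff'.2 fun x hx => ?_
  have hhx : h x = 0 := notMem_support.1 hx
  have heval : aeval (fun k => t • (h * f k)) P x = aeval (fun k => t • (h x * f k x)) P :=
    comp_aeval_apply _ (ContinuousMap.evalAlgHom R R x) P
  simp [heval, hhx, constantCoeff_eq, hP0]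

end ContinuousMap

section Interval

variable {a b s t : ℝ}

/-- A continuous function on `[a, b]` vanishing exactly at the endpoints. Multiplying by it makes
the squeezed copies of a function extend by zero. -/
def endpointBump (a b : ℝ) : C(Icc a b, ℝ) where
  toFun x := (x - a) * (b - x)

lemma support_endpointBump (a b : ℝ) :
    support (endpointBump a b) = {x : Icc a b | (x : ℝ) ∈ Ioo a b} := by
  ext x
  simp [endpointBump, sub_eq_zero, x.2.1.lt_iff_ne', x.2.2.lt_iff_ne']

lemma dense_support_endpointBump (hab : a < b) : Dense (support (endpointBump a b)) := by
  have himage : (↑) '' {x : Icc a b | (x : ℝ) ∈ Ioo a b} = Ioo a b :=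
    Subtype.image_preimage_coe (Icc a b) (Ioo a b) |>.trans
      (inter_eq_right.2 Ioo_subset_Icc_self)
  rw [support_endpointBump, Subtype.dense_iff, himage, closure_Ioo hab.ne]

/-- The self-map of `[a, b]` that stretches the subinterval `[s, t]` affinely onto `[a, b]` and
collapses the points on either side of it to the endpoints. -/
noncomputable def stretch (hab : a < b) (hst : s < t) : C(Icc a b, Icc a b) where
  toFun x := (iccHomeoI a b hab).symm (iccHomeoI s t hst (projIcc s t hst.le x))
  continuous_toFun := by
    have := continuous_projIcc (h := hst.le)
    fun_prop

lemma surjective_stretch (hab : a < b) (hst : s < t) (has : a ≤ s) (htb : t ≤ b) :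
    Surjective (stretch hab hst) := by
  have hproj : Surjective fun x : Icc a b => projIcc s t hst.le x := fun y =>
    ⟨⟨y, Icc_subset_Icc has htb y.2⟩, projIcc_val hst.le y⟩
  exact (iccHomeoI a b hab).symm.surjective.comp ((iccHomeoI s t hst).surjective.comp hproj)

lemma mem_Ioo_of_stretch_mem_Ioo (hab : a < b) (hst : s < t) {x : Icc a b}
    (hx : (stretch hab hst x : ℝ) ∈ Ioo a b) : (x : ℝ) ∈ Ioo s t := by
  refine ⟨?_, ?_⟩ <;> by_contra! hle
  · have hcollapse : (stretch hab hst x : ℝ) = a := by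
      simp [stretch, projIcc_of_le_left hst.le hle]
    exact hx.1.ne' hcollapse
  · have hcollapse : (stretch hab hst x : ℝ) = b := by
      simp [stretch, projIcc_of_right_le hst.le hle, (sub_pos.2 hst).ne']
    exact hx.2.ne hcollapse

lemma exists_surjective_pairwise_disjoint_preimage_Ioo (hab : a < b) :
    ∃ ψ : ℕ → C(Icc a b, Icc a b), (∀ n, Surjective (ψ n)) ∧
      Pairwise (Disjoint on fun n => ψ n ⁻¹' {y : Icc a b | (y : ℝ) ∈ Ioo a b}) := by
  let s : ℕ → ℝ := fun n => a + (b - a) * (1 / ((n : ℝ) + 1))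
  have hs : StrictAnti s := fun m n hmn => by
    have : 0 < b - a := sub_pos.2 hab
    dsimp only [s]
    gcongr
  have has (n : ℕ) : a ≤ s n := le_add_of_nonneg_right <|
    mul_nonneg (sub_nonneg.2 hab.le) Nat.one_div_pos_of_nat.le
  have hsb (n : ℕ) : s n ≤ b := (hs.antitone n.zero_le).trans_eq (by simp [s])
  refine ⟨fun n => stretch hab (hs n.lt_succ_self),
    fun n => surjective_stretch hab _ (has _) (hsb _), fun m n hmn => ?_⟩
  refine ((hs.antitone.pairwise_disjoint_on_Ioo_succ hmn).preimage ((↑) : Icc a b → ℝ)).mono ?_ ?_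
  all_goals exact fun x => mem_Ioo_of_stretch_mem_Ioo hab _

lemma AntiMW.ne_zero {f : ℕ → C(Icc a b, ℝ)} (hf : AntiMW a b f) : f ≠ 0 := by
  rintro rfl
  exact hf.2.2 (by simp)

lemma antiMW_comp_of_pairwise_disjoint_preimage {G : ℕ → C(Icc a b, ℝ)}
    {ψ : ℕ → C(Icc a b, Icc a b)} {U : Set (Icc a b)} (hG0 : Tendsto G atTop (𝓝 0))
    (hG : ¬ Summable fun n => ‖G n‖) (hGU : ∀ n, support (G n) ⊆ U)
    (hψ : ∀ n, Surjective (ψ n)) (hψU : Pairwise (Disjoint on fun n => ψ n ⁻¹' U)) :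
    AntiMW a b fun n => (G n).comp (ψ n) := by
  have hdisj : Pairwise (Disjoint on fun n => support ((G n).comp (ψ n))) :=
    hψU.mono fun m n hmn => hmn.mono (preimage_mono (hGU m)) (preimage_mono (hGU n))
  have hunif : TendstoUniformly (fun n => (G n).comp (ψ n)) 0 atTop := fun V hV =>
    (ContinuousMap.tendsto_iff_tendstoUniformly.1 hG0 V hV).mono fun n hn x => hn (ψ n x)
  refine ⟨fun x => ?_, ⟨_, tendstoUniformly_sum_range_of_pairwise_disjoint_support hdisj hunif⟩, ?_⟩
  · have hfin := (subsingleton_support_apply_of_pairwise_disjoint_support hdisj x).finite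
    exact (summable_of_hasFiniteSupport hfin).abs
  · simpa only [norm_continuousMap_comp_of_surjective _ (hψ _)] using hG

end Interval

theorem stmt14 (a b : ℝ) (hab : a < b) (c : ℕ → ℝ)
    (hc0 : Tendsto c atTop (nhds 0))
    (hcp : ∀ p : ℝ, 1 ≤ p → ¬ Summable fun n => |c n| ^ p)
    {I : Type*} (g : I → C(Set.Icc a b, ℝ)) (hg : GeneratesFreeAlgebra g) :
    ∃ u : I → ℕ → C(Set.Icc a b, ℝ),
      ∀ (N : ℕ) (P : MvPolynomial (Fin N) ℝ), P ≠ 0 →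
        MvPolynomial.coeff 0 P = 0 →
        ∀ v : Fin N → I, Function.Injective v →
          (fun n => MvPolynomial.aeval (fun k => c n • u (v k) n) P) ≠
              (0 : ℕ → C(Set.Icc a b, ℝ)) ∧
          AntiMW a b (fun n => MvPolynomial.aeval (fun k => c n • u (v k) n) P) := by
  obtain ⟨ψ, hψ, hdisj⟩ := exists_surjective_pairwise_disjoint_preimage_Ioo hab
  refine ⟨fun i n => (endpointBump a b * g i).comp (ψ n), fun N P hP hP0 v hv => ?_⟩
  suffices hAntiMW : AntiMW a b fun n =>
      aeval (fun k => c n • (endpointBump a b * g (v k)).comp (ψ n)) P from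
    ⟨hAntiMW.ne_zero, hAntiMW⟩
  have hcomp (n : ℕ) : aeval (fun k => c n • (endpointBump a b * g (v k)).comp (ψ n)) P =
      (aeval (fun k => c n • (endpointBump a b * g (v k))) P).comp (ψ n) :=
    aeval_continuousMap_comp P (fun k => c n • (endpointBump a b * g (v k))) (ψ n)
  simp only [hcomp]
  obtain ⟨d, hd⟩ := hg.exists_aeval_mul_homogeneousComponent_ne_zero
    (mem_nonZeroDivisors_of_dense_support (dense_support_endpointBump hab)) hP hP0 hv
  have hcpow (m : ℕ) (hm : 1 ≤ m) : ¬ Summable fun n => ‖c n‖ ^ m := by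
    simpa only [Real.rpow_natCast, Real.norm_eq_abs] using hcp m (by exact_mod_cast hm)
  have htendsto := (tendsto_aeval_smul_zero hP0 fun k => endpointBump a b * g (v k)).comp hc0
  have hnotSummable := not_summable_norm_aeval_smul hP0 hd hc0 hcpow
  have hsupport (n : ℕ) := support_endpointBump a b ▸
    support_aeval_smul_mul_subset hP0 (c n) (endpointBump a b) fun k => g (v k)
  exact antiMW_comp_of_pairwise_disjoint_preimage htendsto hnotSummable hsupport hψ hdisj
end

section
/- Let N ∈ ℕ, let c₁, …, c_N be pairwise distinct real numbers in (0,1), and let λ₁, …, λ_N be real numbers, not all zero. Then the real sequence (aₙ)_{n≥1} given by aₙ = ∑_{j=1}^{N} λⱼ n^{-cⱼ} satisfies aₙ → 0 and ∑_{n=1}^∞ |aₙ| = +∞; in particular the sequences (n^{-c})_{n≥1}, c ∈ (0,1), span a linear subspace M of the sequence space of dimension 𝔠 with M \ {0} ⊂ c₀ \ ℓ₁. -/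
open Filter Topology

/-- The set of sequences `(n^{-c})_{n≥1}` for `c ∈ (0,1)` (the index `n` runs through
`1, 2, 3, …`, realized as `n+1` for `n : ℕ`). -/
def powSeqSet : Set (ℕ → ℝ) :=
  {s | ∃ γ ∈ Set.Ioo (0 : ℝ) 1, s = fun n : ℕ => ((n : ℝ) + 1) ^ (-γ)}

/-!
The sequences `(n^{-γ})` form an asymptotic scale: a larger exponent gives a negligible sequence.
Hence a nonzero linear combination is asymptotically equivalent to its term of least exponent.
In particular it is not zero, so the sequences are linearly independent, and it is summable only
if this least exponent exceeds `1`.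
-/

open Asymptotics

section AsymptoticScale

variable {α ι 𝕜 E : Type*} [NormedField 𝕜] [NormedAddCommGroup E] [NormedSpace 𝕜 E]
  {l : Filter α} {v : ι → α → E}

theorem linearCombination_isEquivalent_of_isLeast [PartialOrder ι]
    (hv : ∀ ⦃i j⦄, i < j → v j =o[l] v i) {f : ι →₀ 𝕜} {m : ι}
    (hm : IsLeast (f.support : Set ι) m) :
    Finsupp.linearCombination 𝕜 v f ~[l] f m • v m := by
  classical
  have hfm : f m ≠ 0 := Finsupp.mem_support_iff.1 hm.1
  have hrest : (∑ i ∈ f.support.erase m, f i • v i) =o[l] (f m • v m) := by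
    refine IsLittleO.sum fun i hi => ?_
    obtain ⟨him, hi⟩ := Finset.mem_erase.1 hi
    exact (isLittleO_const_smul_right hfm).2
      ((hv ((hm.2 hi).lt_of_ne' him)).const_smul_left (f i))
  rw [Finsupp.linearCombination_apply, Finsupp.sum, ← Finset.add_sum_erase _ _ hm.1]
  exact IsEquivalent.refl.add_isLittleO hrest

theorem linearIndependent_of_isLittleO [LinearOrder ι]
    (hv : ∀ ⦃i j⦄, i < j → v j =o[l] v i) (hne : ∀ i, ∃ᶠ x in l, v i x ≠ 0) :
    LinearIndependent 𝕜 v := by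
  rw [linearIndependent_iff]
  intro f hf
  by_contra hf0
  obtain ⟨m, hm⟩ : ∃ m, IsLeast (f.support : Set ι) m :=
    ⟨_, f.support.isLeast_min' (Finsupp.support_nonempty_iff.2 hf0)⟩
  have hequiv := linearCombination_isEquivalent_of_isLeast hv hm
  rw [hf] at hequiv
  have hzero := isEquivalent_zero_iff_eventually_zero.1 hequiv.symm
  refine hne m (hzero.mono fun x hx => not_not.2 ?_)
  exact (smul_eq_zero.1 hx).resolve_left (Finsupp.mem_support_iff.1 hm.1)

end AsymptoticScale

theorem tendsto_zero_of_mem_span {α R M : Type*} [Semiring R] [AddCommMonoid M] [Module R M]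
    [TopologicalSpace M] [ContinuousAdd M] [ContinuousConstSMul R M] {l : Filter α}
    {S : Set (α → M)} (hS : ∀ s ∈ S, Tendsto s l (𝓝 0)) {s : α → M}
    (hs : s ∈ Submodule.span R S) : Tendsto s l (𝓝 0) := by
  induction hs using Submodule.span_induction with
  | mem s hs => exact hS s hs
  | zero => exact tendsto_const_nhds
  | add s t _ _ hs ht => exact add_zero (0 : M) ▸ hs.add ht
  | smul a s _ hs => exact smul_zero (A := M) a ▸ hs.const_smul a

/-- The sequence `(n^{-γ})_{n≥1}`, for an arbitrary real exponent `γ`, with the index shifted by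
one as in `powSeqSet`. -/
noncomputable def powSeq (γ : ℝ) : ℕ → ℝ :=
  fun n => ((n : ℝ) + 1) ^ (-γ)

theorem powSeqSet_eq_image : powSeqSet = powSeq '' Set.Ioo 0 1 :=
  Set.ext fun _ => exists_congr fun _ => and_congr_right' eq_comm

theorem powSeq_pos (γ : ℝ) (n : ℕ) : 0 < powSeq γ n :=
  Real.rpow_pos_of_pos n.cast_add_one_pos _

theorem tendsto_powSeq {γ : ℝ} (hγ : 0 < γ) : Tendsto (powSeq γ) atTop (𝓝 0) :=
  (tendsto_rpow_neg_atTop hγ).comp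
    (tendsto_atTop_add_const_right _ _ tendsto_natCast_atTop_atTop)

theorem summable_powSeq_iff {γ : ℝ} : Summable (powSeq γ) ↔ 1 < γ := by
  have hshift := summable_nat_add_iff (f := fun n : ℕ => (n : ℝ) ^ (-γ)) 1
  simp only [Nat.cast_add, Nat.cast_one] at hshift
  exact hshift.trans (Real.summable_nat_rpow.trans neg_lt_neg_iff)

theorem powSeq_isLittleO {γ δ : ℝ} (h : γ < δ) : powSeq δ =o[atTop] powSeq γ := by
  refine isLittleO_of_tendsto (fun n hn => absurd hn (powSeq_pos γ n).ne') ?_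
  refine (tendsto_powSeq (sub_pos.2 h)).congr fun n => ?_
  rw [powSeq, powSeq, powSeq, ← Real.rpow_sub n.cast_add_one_pos]
  ring_nf

theorem linearIndependent_powSeq : LinearIndependent ℝ powSeq :=
  linearIndependent_of_isLittleO (l := atTop) (fun _ _ => powSeq_isLittleO)
    fun γ => Frequently.of_forall fun n => (powSeq_pos γ n).ne'

theorem one_lt_of_summable_linearCombination_powSeq {f : ℝ →₀ ℝ}
    (hf : Summable (Finsupp.linearCombination ℝ powSeq f)) {γ : ℝ} (hγ : γ ∈ f.support) :
    1 < γ := by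
  have hm := f.support.isLeast_min' ⟨γ, hγ⟩
  have hequiv := linearCombination_isEquivalent_of_isLeast (fun _ _ => powSeq_isLittleO) hm
  have hlead := hequiv.summable_iff_nat.1 hf
  have hsummable := (summable_mul_left_iff (Finsupp.mem_support_iff.1 hm.1)).1 hlead
  exact (summable_powSeq_iff.1 hsummable).trans_le (hm.2 hγ)

theorem not_summable_of_mem_span_powSeq {Γ : Set ℝ} (hΓ : Γ ⊆ Set.Iic 1) {s : ℕ → ℝ}
    (hs : s ∈ Submodule.span ℝ (powSeq '' Γ)) (hs0 : s ≠ 0) : ¬ Summable s := by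
  obtain ⟨f, hfΓ, rfl⟩ := (Finsupp.mem_span_image_iff_linearCombination ℝ).1 hs
  have hf0 : f ≠ 0 := fun h => hs0 (by rw [h, map_zero])
  obtain ⟨γ, hγ⟩ := Finsupp.support_nonempty_iff.2 hf0
  intro hsummable
  exact (one_lt_of_summable_linearCombination_powSeq hsummable hγ).not_ge (hΓ (hfΓ hγ))

theorem rank_span_powSeq_image (Γ : Set ℝ) :
    Module.rank ℝ (Submodule.span ℝ (powSeq '' Γ)) = Cardinal.mk Γ := by
  rw [rank_span_set (linearIndependent_powSeq.linearIndepOn Γ).id_image,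
    Cardinal.mk_image_eq linearIndependent_powSeq.injective]

theorem tendsto_zero_and_not_summable_abs_of_mem_span_powSeqSet {s : ℕ → ℝ}
    (hs : s ∈ Submodule.span ℝ powSeqSet) (hs0 : s ≠ 0) :
    Tendsto s atTop (𝓝 0) ∧ ¬ Summable fun n => |s n| := by
  rw [powSeqSet_eq_image] at hs
  refine ⟨tendsto_zero_of_mem_span ?_ hs, ?_⟩
  · rintro _ ⟨γ, hγ, rfl⟩
    exact tendsto_powSeq hγ.1
  · rw [summable_abs_iff]
    exact not_summable_of_mem_span_powSeq (fun γ hγ => hγ.2.le) hs hs0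

theorem sum_smul_powSeq_ne_zero {ι : Type*} [Fintype ι] {c : ι → ℝ} (hc : Function.Injective c)
    {l : ι → ℝ} (hl : l ≠ 0) : ∑ j, l j • powSeq (c j) ≠ 0 := fun h =>
  hl (funext (Fintype.linearIndependent_iff.1 (linearIndependent_powSeq.comp c hc) l h))

theorem stmt17 (N : ℕ) (c : Fin N → ℝ) (hcinj : Function.Injective c)
    (hc : ∀ j, c j ∈ Set.Ioo (0 : ℝ) 1) (l : Fin N → ℝ) (hl : l ≠ 0) :
    (Tendsto (fun n : ℕ => ∑ j, l j * ((n : ℝ) + 1) ^ (-(c j))) atTop (nhds 0) ∧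
      ¬ Summable fun n : ℕ => |∑ j, l j * ((n : ℝ) + 1) ^ (-(c j))|) ∧
    Module.rank ℝ (Submodule.span ℝ powSeqSet) = Cardinal.continuum ∧
    ∀ s ∈ Submodule.span ℝ powSeqSet, s ≠ 0 →
      Tendsto s atTop (nhds 0) ∧ ¬ Summable fun n => |s n| := by
  refine ⟨?_, ?_, fun s => tendsto_zero_and_not_summable_abs_of_mem_span_powSeqSet⟩
  · have hmem : ∑ j, l j • powSeq (c j) ∈ Submodule.span ℝ powSeqSet :=
      sum_mem fun j _ => Submodule.smul_mem _ _ (Submodule.subset_span ⟨c j, hc j, rfl⟩)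
    simpa only [Finset.sum_apply, Pi.smul_apply, smul_eq_mul, powSeq, Finset.sum_fn] using
      tendsto_zero_and_not_summable_abs_of_mem_span_powSeqSet hmem
        (sum_smul_powSeq_ne_zero hcinj hl)
  · rw [powSeqSet_eq_image, rank_span_powSeq_image, Cardinal.mk_Ioo_real one_pos]
end

section
/- Let [a,b] be a nondegenerate compact interval with a < b, and let C ⊂ (0, +∞) be a set that is linearly independent over the field ℚ. Then the family { x ↦ e^{cx} : c ∈ C } generates a free algebra in C([a,b]): for every N ∈ ℕ, every nonzero real polynomial P in N variables with zero constant term, and all pairwise distinct c₁,…,c_N ∈ C, the function x ↦ P(e^{c₁x}, …, e^{c_N x}) is not identically zero on [a,b]. -/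
open Filter Topology

/-!
A monomial in the functions `x ↦ exp (vᵢ x)` is again an exponential `x ↦ exp (r x)`, with
`r = ∑ mᵢ vᵢ`, and linear independence of the `vᵢ` over `ℚ` makes different monomials have
different exponents `r`. So a polynomial relation is a linear relation between distinct
exponentials. If it holds on a set with an accumulation point, it holds everywhere by the identity
theorem, and there it is trivial because distinct characters are linearly independent.
-/

theorem algebraicIndependent_of_linearIndependent_prod_pow {ι R A : Type*} [CommRing R]
    [CommRing A] [Algebra R A] {f : ι → A}
    (hf : LinearIndependent R fun m : ι →₀ ℕ => m.prod fun i k => f i ^ k) :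
    AlgebraicIndependent R f := by
  refine LinearMap.injective_of_linearIndependent (f := (MvPolynomial.aeval f).toLinearMap)
    (MvPolynomial.basisMonomials ι R).span_eq ?_
  have aeval_comp_monomial : (MvPolynomial.aeval f).toLinearMap ∘ MvPolynomial.basisMonomials ι R =
      fun m : ι →₀ ℕ => m.prod fun i k => f i ^ k :=
    funext fun m => by simp [MvPolynomial.aeval_monomial]
  rwa [aeval_comp_monomial]

theorem mvPolynomial_aeval_pi_apply {σ R X : Type*} {A : X → Type*} [CommSemiring R]
    [∀ x, CommSemiring (A x)] [∀ x, Algebra R (A x)] (f : σ → ∀ x, A x) (P : MvPolynomial σ R)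
    (x : X) : MvPolynomial.aeval f P x = MvPolynomial.aeval (fun i => f i x) P :=
  MvPolynomial.comp_aeval_apply f (Pi.evalAlgHom R A x) P

theorem exists_eval_ne_zero_of_algebraicIndependent {σ X R : Type*} [CommRing R] {f : σ → X → R}
    (hf : AlgebraicIndependent R f) {P : MvPolynomial σ R} (hP : P ≠ 0) :
    ∃ x, MvPolynomial.eval (fun i => f i x) P ≠ 0 := by
  contrapose! hP
  refine hf.eq_zero_of_aeval_eq_zero P (funext fun x => ?_)
  rw [mvPolynomial_aeval_pi_apply, MvPolynomial.aeval_eq_eval]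
  exact hP x

theorem accPt_principal_Icc_left {α : Type*} [LinearOrder α] [TopologicalSpace α] [OrderTopology α]
    [DenselyOrdered α] {a b : α} (hab : a < b) : AccPt a (𝓟 (Set.Icc a b)) := by
  rw [accPt_principal_iff_nhdsWithin, Set.Icc_sdiff_left]
  exact left_nhdsWithin_Ioc_neBot hab

theorem linearIndependent_restrict_of_analyticOnNhd {ι 𝕜 E : Type*} [NontriviallyNormedField 𝕜]
    [PreconnectedSpace 𝕜] [NormedAddCommGroup E] [NormedSpace 𝕜 E] {f : ι → 𝕜 → E}
    (hf : ∀ i, AnalyticOnNhd 𝕜 (f i) Set.univ) (hli : LinearIndependent 𝕜 f)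
    {s : Set 𝕜} {z : 𝕜} (hz : AccPt z (𝓟 s)) :
    LinearIndependent 𝕜 fun i (x : s) => f i x := by
  rw [linearIndependent_iff'] at hli ⊢
  intro t g hg
  have sum_eq_zero_on : ∀ x ∈ s, (∑ i ∈ t, g i • f i) x = 0 := fun x hx => by
    simpa using congrFun hg ⟨x, hx⟩
  have sum_analytic : AnalyticOnNhd 𝕜 (∑ i ∈ t, g i • f i) Set.univ :=
    Finset.analyticOnNhd_sum t fun i _ => (hf i).const_smul
  have sum_eq_zero : Set.EqOn (∑ i ∈ t, g i • f i) 0 Set.univ :=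
    sum_analytic.eqOn_zero_of_preconnected_of_frequently_eq_zero isPreconnected_univ
      (Set.mem_univ z) ((accPt_iff_frequently_nhdsNE.1 hz).mono sum_eq_zero_on)
  exact hli t g ((Set.eqOn_univ _ _).1 sum_eq_zero)

section Exponentials

open NormedSpace (exp)

variable {𝕜 : Type*} [RCLike 𝕜]

/-- The character `x ↦ exp (r * x)` of the additive group of `𝕜`, as a monoid homomorphism so that
Dedekind's theorem `linearIndependent_monoidHom` applies to it. -/
noncomputable def expCharacter (r : 𝕜) : Multiplicative 𝕜 →* 𝕜 where
  toFun x := exp (r * x.toAdd)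
  map_one' := by simp
  map_mul' x y := by simp [mul_add, NormedSpace.exp_add]

theorem hasDerivAt_exp_mul_zero (r : 𝕜) :
    HasDerivAt (fun x : 𝕜 => exp (r * x)) r 0 := by
  simpa [mul_comm] using hasDerivAt_exp_smul_const r (0 : 𝕜)

theorem expCharacter_injective :
    Function.Injective (expCharacter : 𝕜 → Multiplicative 𝕜 →* 𝕜) := fun r s hrs =>
  have exp_mul_eq : (fun x => exp (r * x)) = fun x => exp (s * x) :=
    funext fun x => DFunLike.congr_fun hrs (Multiplicative.ofAdd x)
  (hasDerivAt_exp_mul_zero r).unique (exp_mul_eq ▸ hasDerivAt_exp_mul_zero s)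

theorem linearIndependent_exp_mul :
    LinearIndependent 𝕜 fun r x : 𝕜 => exp (r * x) :=
  (linearIndependent_monoidHom (Multiplicative 𝕜) 𝕜).comp expCharacter expCharacter_injective

theorem linearIndependent_restrict_exp_mul {s : Set 𝕜} {z : 𝕜} (hz : AccPt z (𝓟 s)) :
    LinearIndependent 𝕜 fun (r : 𝕜) (x : s) => exp (r * x) :=
  linearIndependent_restrict_of_analyticOnNhd
    (fun r x _ => (NormedSpace.exp_analytic (𝕂 := 𝕜) (r * x)).comp (by fun_prop))
    linearIndependent_exp_mul hz

theorem prod_exp_mul_pow {ι : Type*} (v : ι → 𝕜) (m : ι →₀ ℕ) (x : 𝕜) :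
    (m.prod fun i k => exp (v i * x) ^ k) =
      exp (Finsupp.linearCombination ℕ v m * x) := by
  simp only [Finsupp.prod, Finsupp.linearCombination_apply, Finsupp.sum, Finset.sum_mul,
    NormedSpace.exp_sum, smul_mul_assoc, NormedSpace.exp_nsmul]

theorem stmt18_general {ι : Type*} {v : ι → 𝕜} (hv : LinearIndependent ℚ v)
    {s : Set 𝕜} {z : 𝕜} (hz : AccPt z (𝓟 s)) :
    AlgebraicIndependent 𝕜 fun i (x : s) => exp (v i * x) := by
  have exponent_injective : Function.Injective (Finsupp.linearCombination ℕ v) :=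
    hv.restrict_scalars' ℕ
  apply algebraicIndependent_of_linearIndependent_prod_pow
  have monomial_eq : (fun m : ι →₀ ℕ => m.prod fun i k => (fun x : s => exp (v i * x)) ^ k) =
      fun m (x : s) => exp (Finsupp.linearCombination ℕ v m * x) :=
    funext₂ fun m x => by simp [← prod_exp_mul_pow, Finsupp.prod]
  rw [monomial_eq]
  exact (linearIndependent_restrict_exp_mul hz).comp _ exponent_injective

end Exponentials

/-- If `C ⊆ (0,∞)` is linearly independent over `ℚ`, then the exponentials
`x ↦ e^{cx}`, `c ∈ C`, generate a free algebra in `C([a,b])`: no nonzero real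
polynomial without constant term in finitely many distinct of these functions
vanishes identically on `[a,b]`. -/
theorem stmt18 (a b : ℝ) (hab : a < b) (C : Set ℝ)
    (hCpos : C ⊆ Set.Ioi (0 : ℝ))
    (hCind : LinearIndependent ℚ ((↑) : C → ℝ)) :
    ∀ (N : ℕ) (P : MvPolynomial (Fin N) ℝ), P ≠ 0 →
      MvPolynomial.coeff 0 P = 0 →
      ∀ v : Fin N → C, Function.Injective v →
        ¬ ∀ x ∈ Set.Icc a b,
            MvPolynomial.eval (fun k => Real.exp ((v k : ℝ) * x)) P = 0 := by
  intro N P hP _ v hv hzero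
  obtain ⟨x, hx⟩ := exists_eval_ne_zero_of_algebraicIndependent
    (stmt18_general (hCind.comp v hv) (accPt_principal_Icc_left hab)) hP
  exact hx (by simpa only [Real.exp_eq_exp_ℝ, Function.comp_apply] using hzero x x.2)
end

section
/- For each n ≥ 1 define fₙ : [0,1] → ℝ by fₙ(x) = (1/n)·sin²(2^{n+1}πx) if x ∈ (2^{-(n+1)}, 2^{-n}) and fₙ(x) = 0 otherwise. Then each fₙ is continuous on [0,1], sup_{x∈[0,1]} |fₙ(x)| = 1/n (so ∑ₙ ‖fₙ‖∞ = +∞), yet the series ∑ₙ fₙ(x) converges absolutely at every x ∈ [0,1] and its partial sums converge uniformly on [0,1]; that is, (fₙ)ₙ is an Anti M-Weierstrass sequence on [0,1]. -/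
open Filter Topology

/-!
At any point at most one member of a family of functions with pairwise disjoint supports is nonzero.
Hence each tail of the series is, pointwise, at most one term, and the series converges uniformly as
soon as its terms tend uniformly to zero, no matter how slowly. Here the supports lie in the
disjoint dyadic intervals `(2⁻⁽ⁿ⁺¹⁾, 2⁻ⁿ)` and the sup norms are `1 / n`.
-/

open Function Set

section DisjointSupport

variable {ι α E : Type*} {f : ι → α → E}

theorem subsingleton_support_eval_of_pairwise_disjoint [Zero E]
    (hf : Pairwise (Disjoint on fun i => support (f i))) (x : α) :
    (support fun i => f i x).Subsingleton := fun i hi j hj => by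
  by_contra hij
  exact disjoint_left.mp (hf hij) hi hj

theorem summable_norm_of_pairwise_disjoint_support [SeminormedAddCommGroup E]
    (hf : Pairwise (Disjoint on fun i => support (f i))) (x : α) :
    Summable fun i => ‖f i x‖ := by
  refine summable_of_hasFiniteSupport
    ((subsingleton_support_eval_of_pairwise_disjoint hf x).finite.subset fun i hi h => hi ?_)
  simp only [h, norm_zero]

theorem hasSumUniformlyOn_of_pairwise_disjoint_support [AddCommMonoid E] [UniformSpace E]
    {s : Set α} (hf : Pairwise (Disjoint on fun i => support (f i)))
    (hlim : TendstoUniformlyOn f 0 cofinite s) :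
    HasSumUniformlyOn f (fun x => ∑' i, f i x) s := by
  rw [hasSumUniformlyOn_iff_tendstoUniformlyOn]
  intro u hu
  have hlarge : {i | ¬ ∀ x ∈ s, (f i x, 0) ∈ u}.Finite := hlim _ (symm_le_uniformity hu)
  filter_upwards [eventually_ge_atTop hlarge.toFinset] with t ht x hx
  have hsub := subsingleton_support_eval_of_pairwise_disjoint hf x
  by_cases hzero : ∀ i ∉ t, f i x = 0
  · rw [tsum_eq_sum hzero]
    exact refl_mem_uniformity hu
  · push Not at hzero
    obtain ⟨i, hit, hi⟩ := hzero
    have hother : ∀ j, j ≠ i → f j x = 0 := fun j hji => by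
      by_contra hj
      exact hji (hsub hj hi)
    have hsum : ∑ j ∈ t, f j x = 0 :=
      Finset.sum_eq_zero fun j hj => hother j (ne_of_mem_of_not_mem hj hit)
    have hsmall : ∀ y ∈ s, (f i y, 0) ∈ u := by
      by_contra hlarge_i
      exact hit (ht (hlarge.mem_toFinset.mpr hlarge_i))
    rw [tsum_eq_single i hother, hsum]
    exact hsmall x hx

end DisjointSupport

/-- The bump `sin² (π (x - a) / (b - a))` on `(a, b)`, extended by zero: a continuous function
supported in `(a, b)` which rises from `0` to its maximum `1` at the midpoint. -/
noncomputable def sinSqBump (a b : ℝ) : ℝ → ℝ :=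
  (Ioo a b).indicator fun x => Real.sin (Real.pi * ((x - a) / (b - a))) ^ 2

namespace sinSqBump

variable {a b : ℝ}

theorem support_subset : support (sinSqBump a b) ⊆ Ioo a b :=
  support_indicator_subset

theorem nonneg (x : ℝ) : 0 ≤ sinSqBump a b x :=
  indicator_nonneg (fun _ _ => sq_nonneg _) x

theorem le_one (x : ℝ) : sinSqBump a b x ≤ 1 :=
  indicator_apply_le' (fun _ => Real.sin_sq_le_one _) fun _ => zero_le_one

theorem apply_midpoint (hab : a < b) : sinSqBump a b ((a + b) / 2) = 1 := by
  have hmem : (a + b) / 2 ∈ Ioo a b := ⟨by linarith, by linarith⟩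
  have hba : b - a ≠ 0 := (sub_pos.mpr hab).ne'
  have harg : Real.pi * (((a + b) / 2 - a) / (b - a)) = Real.pi / 2 := by
    field_simp
    ring
  rw [sinSqBump, indicator_of_mem hmem, harg, Real.sin_pi_div_two, one_pow]

protected theorem continuous (hab : a < b) : Continuous (sinSqBump a b) := by
  refine Continuous.indicator (fun x hx => ?_) (by fun_prop)
  rw [frontier_Ioo hab] at hx
  rcases hx with rfl | rfl
  · simp
  · simp [(sub_pos.mpr hab).ne']

theorem abs_const_mul_le (c x : ℝ) : |c * sinSqBump a b x| ≤ |c| := by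
  rw [abs_mul, abs_of_nonneg (nonneg x)]
  exact mul_le_of_le_one_right (abs_nonneg c) (le_one x)

theorem sSup_abs_const_mul_image (hab : a < b) {s : Set ℝ} (hs : (a + b) / 2 ∈ s) (c : ℝ) :
    sSup ((fun x => |c * sinSqBump a b x|) '' s) = |c| := by
  refine IsGreatest.csSup_eq ⟨⟨_, hs, ?_⟩, forall_mem_image.mpr fun x _ => abs_const_mul_le c x⟩
  simp only [apply_midpoint hab, mul_one]

theorem pairwise_disjoint_support_const_mul {u : ℕ → ℝ} (hu : Antitone u) (c : ℕ → ℝ) :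
    Pairwise (Disjoint on fun n => support fun x => c n * sinSqBump (u (n + 1)) (u n) x) :=
  hu.pairwise_disjoint_on_Ioo_succ.mono fun _ _ hdisj =>
    hdisj.mono ((support_mul_subset_right _ _).trans support_subset)
      ((support_mul_subset_right _ _).trans support_subset)

theorem tendstoUniformly_const_mul {ι : Type*} {l : Filter ι} {c : ι → ℝ}
    (hc : Tendsto c l (𝓝 0)) (u v : ι → ℝ) :
    TendstoUniformly (fun i x => c i * sinSqBump (u i) (v i) x) 0 l := by
  rw [Metric.tendstoUniformly_iff]
  intro ε hε
  filter_upwards [hc.norm.eventually_lt_const (by simpa using hε)] with i hi x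
  rw [Pi.zero_apply, dist_zero_left]
  exact (abs_const_mul_le (c i) x).trans_lt hi

theorem dyadic_apply (n : ℕ) (x : ℝ) :
    sinSqBump (2⁻¹ ^ (n + 1)) (2⁻¹ ^ n) x =
      if x ∈ Ioo ((2 : ℝ) ^ (-((n : ℤ) + 1))) ((2 : ℝ) ^ (-(n : ℤ))) then
        Real.sin ((2 : ℝ) ^ (n + 1) * Real.pi * x) ^ 2
      else 0 := by
  have hleft : (2 : ℝ) ^ (-((n : ℤ) + 1)) = 2⁻¹ ^ (n + 1) := by
    rw [zpow_neg, inv_pow]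
    norm_cast
  have hright : (2 : ℝ) ^ (-(n : ℤ)) = 2⁻¹ ^ n := by
    rw [zpow_neg, inv_pow, zpow_natCast]
  have harg : Real.pi * ((x - 2⁻¹ ^ (n + 1)) / (2⁻¹ ^ n - 2⁻¹ ^ (n + 1))) =
      2 ^ (n + 1) * Real.pi * x - Real.pi := by
    have hlength : (2⁻¹ : ℝ) ^ n - 2⁻¹ ^ (n + 1) = (2 ^ (n + 1))⁻¹ := by
      rw [← inv_pow]
      ring
    rw [hlength, inv_pow]
    field_simp
  rw [hleft, hright, sinSqBump, indicator_apply, harg, Real.sin_sub_pi, neg_sq]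

end sinSqBump

theorem two_inv_pow_succ_lt (n : ℕ) : (2⁻¹ : ℝ) ^ (n + 1) < 2⁻¹ ^ n :=
  pow_lt_pow_right_of_lt_one₀ (by norm_num) (by norm_num) n.lt_succ_self

/-- The function `(1 / n) sin² (2ⁿ⁺¹ π x)` on `(2⁻⁽ⁿ⁺¹⁾, 2⁻ⁿ)`, extended by zero, written as a
multiple of a `sinSqBump`; for `n = 0` it vanishes identically because `1 / 0 = 0`. -/
noncomputable def dyadicBump (n : ℕ) (x : ℝ) : ℝ :=
  1 / (n : ℝ) * sinSqBump (2⁻¹ ^ (n + 1)) (2⁻¹ ^ n) x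

namespace dyadicBump

theorem apply_eq_ite (n : ℕ) (x : ℝ) :
    dyadicBump n x =
      if x ∈ Ioo ((2 : ℝ) ^ (-((n : ℤ) + 1))) ((2 : ℝ) ^ (-(n : ℤ))) then
        (1 / (n : ℝ)) * Real.sin ((2 : ℝ) ^ (n + 1) * Real.pi * x) ^ 2
      else 0 := by
  rw [dyadicBump, sinSqBump.dyadic_apply, mul_ite, mul_zero]

protected theorem continuous (n : ℕ) : Continuous (dyadicBump n) :=
  (sinSqBump.continuous (two_inv_pow_succ_lt n)).const_mul _

theorem sSup_abs_image_Icc (n : ℕ) :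
    sSup ((fun x => |dyadicBump n x|) '' Icc (0 : ℝ) 1) = 1 / (n : ℝ) := by
  have hle : (2⁻¹ : ℝ) ^ n ≤ 1 := pow_le_one₀ (by norm_num) (by norm_num)
  have hmid : ((2⁻¹ : ℝ) ^ (n + 1) + 2⁻¹ ^ n) / 2 ∈ Icc (0 : ℝ) 1 :=
    ⟨by positivity, by linarith [two_inv_pow_succ_lt n]⟩
  simp only [dyadicBump]
  rw [sinSqBump.sSup_abs_const_mul_image (two_inv_pow_succ_lt n) hmid,
    abs_of_nonneg (by positivity)]

theorem not_summable_sSup_abs_image_Icc :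
    ¬ Summable fun n : ℕ => sSup ((fun x => |dyadicBump n x|) '' Icc (0 : ℝ) 1) := by
  simpa only [sSup_abs_image_Icc] using Real.not_summable_one_div_natCast

theorem pairwise_disjoint_support : Pairwise (Disjoint on fun n => support (dyadicBump n)) :=
  sinSqBump.pairwise_disjoint_support_const_mul
    (antitone_nat_of_succ_le fun n => (two_inv_pow_succ_lt n).le) _

theorem tendstoUniformly_zero : TendstoUniformly dyadicBump 0 atTop :=
  sinSqBump.tendstoUniformly_const_mul tendsto_one_div_atTop_nhds_zero_nat _ _

end dyadicBump

/-- The basic example: `fₙ(x) = (1/n)·sin²(2^{n+1}πx)` on `(2^{-(n+1)}, 2^{-n})` and `0`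
elsewhere, `n ≥ 1`, is an Anti M-Weierstrass sequence on `[0,1]`: each `fₙ` is continuous,
`sup_{[0,1]}|fₙ| = 1/n` (so the series of sup norms diverges), yet `∑ₙ fₙ(x)` converges
absolutely at each point and its partial sums converge uniformly on `[0,1]`. -/
theorem stmt19 (f : ℕ → ℝ → ℝ)
    (hf : ∀ n : ℕ, 1 ≤ n → ∀ x : ℝ,
      f n x =
        if x ∈ Set.Ioo ((2 : ℝ) ^ (-((n : ℤ) + 1))) ((2 : ℝ) ^ (-(n : ℤ))) then
          (1 / (n : ℝ)) * Real.sin ((2 : ℝ) ^ (n + 1) * Real.pi * x) ^ 2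
        else 0) :
    (∀ n : ℕ, 1 ≤ n → ContinuousOn (f n) (Set.Icc 0 1)) ∧
    (∀ n : ℕ, 1 ≤ n →
      sSup ((fun x => |f n x|) '' Set.Icc (0 : ℝ) 1) = 1 / (n : ℝ)) ∧
    (¬ Summable fun n : ℕ =>
      sSup ((fun x => |f (n + 1) x|) '' Set.Icc (0 : ℝ) 1)) ∧
    (∀ x ∈ Set.Icc (0 : ℝ) 1, Summable fun n : ℕ => |f (n + 1) x|) ∧
    (∃ S : ℝ → ℝ,
      TendstoUniformlyOn (fun N x => ∑ k ∈ Finset.range N, f (k + 1) x) S atTop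
        (Set.Icc 0 1)) := by
  have hbump : ∀ n : ℕ, 1 ≤ n → f n = dyadicBump n := fun n hn => by
    funext x
    rw [hf n hn, dyadicBump.apply_eq_ite]
  have hsucc : ∀ n : ℕ, f (n + 1) = dyadicBump (n + 1) := fun n => hbump (n + 1) n.succ_pos
  have hdisj : Pairwise (Disjoint on fun n => support (dyadicBump (n + 1))) :=
    dyadicBump.pairwise_disjoint_support.comp_of_injective (add_left_injective 1)
  have hlim : TendstoUniformly (fun n => dyadicBump (n + 1)) 0 cofinite := by
    rw [Nat.cofinite_eq_atTop]
    exact fun u hu => (tendsto_add_atTop_nat 1).eventually (dyadicBump.tendstoUniformly_zero u hu)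
  simp only [hsucc]
  refine ⟨fun n hn => ?_, fun n hn => ?_, fun hsum => ?_,
    fun x _ => summable_norm_of_pairwise_disjoint_support hdisj x, _,
    (hasSumUniformlyOn_of_pairwise_disjoint_support hdisj
      hlim.tendstoUniformlyOn).tendstoUniformlyOn_finsetRange⟩
  · rw [hbump n hn]
    exact (dyadicBump.continuous n).continuousOn
  · rw [hbump n hn, dyadicBump.sSup_abs_image_Icc]
  · exact dyadicBump.not_summable_sSup_abs_image_Icc ((summable_nat_add_iff 1).mp hsum)
end
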